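/- Let m : V × V → ℕ be the edge-multiplicity function of a loopless multigraph on a vertex set V with exactly 4 elements, i.e. m(i,j) = m(j,i) for all i, j and m(i,i) = 0 for all i. Assume that every vertex has degree 3 (Σ_j m(i,j) = 3 for each i) and that the graph is connected (the simple graph in which i is adjacent to j if and only if i ≠ j and m(i,j) ≥ 1 is connected). Then either m(i,j) = 1 for all i ≠ j (the multigraph is the complete graph K₄), or the vertices can be labelled a, b, c, d so that m(a,b) = m(c,d) = 2, m(a,c) = m(b,d) = 1, and m(a,d) = m(b,c) = 0. -/

import Mathlib

set_option maxHeartbeats 1000000 in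
/-- Classification of connected loopless multigraphs on 4 vertices in which every
vertex has degree 3: either it is the complete graph `K₄` (all multiplicities between
distinct vertices equal to 1), or the vertices can be labelled `a, b, c, d` so that
`m a b = m c d = 2`, `m a c = m b d = 1` and `m a d = m b c = 0`. -/
theorem multigraph_four_vertices_degree_three_classification
    {V : Type*} [Fintype V] [DecidableEq V] (hV : Fintype.card V = 4)
    (m : V → V → ℕ)
    (hsymm : ∀ i j, m i j = m j i)
    (hloop : ∀ i, m i i = 0)
    (hdeg : ∀ i, ∑ j, m i j = 3)
    (hconn : (SimpleGraph.fromRel (fun i j => 1 ≤ m i j)).Connected) :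
    (∀ i j, i ≠ j → m i j = 1) ∨
    ∃ a b c d : V, ({a, b, c, d} : Finset V) = Finset.univ ∧
      m a b = 2 ∧ m c d = 2 ∧ m a c = 1 ∧ m b d = 1 ∧ m a d = 0 ∧ m b c = 0 := by
  classical
  -- a proper nonempty set of vertices closed under adjacency is impossible
  have hcut : ∀ a b c d : V, c ≠ a → c ≠ b → (∀ x, x = a ∨ x = b ∨ x = c ∨ x = d) →
      m a c = 0 → m a d = 0 → m b c = 0 → m b d = 0 → False := by
    intro a b c d hca hcb hall h1 h2 h3 h4
    obtain ⟨w⟩ := hconn.preconnected a c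
    have key : ∀ u v : V, (SimpleGraph.fromRel (fun i j => 1 ≤ m i j)).Walk u v →
        (u = a ∨ u = b) → (v = a ∨ v = b) := by
      intro u v w
      induction w with
      | nil => exact id
      | @cons u v w h p ih =>
        intro hu
        apply ih
        rw [SimpleGraph.fromRel_adj] at h
        have h' : 1 ≤ m u v := by
          rcases h.2 with h | h
          · exact h
          · rw [hsymm]; exact h
        rcases hall v with hv | hv | hv | hv
        · exact Or.inl hv
        · exact Or.inr hv
        · subst hv; rcases hu with rfl | rfl <;> omega
        · subst hv; rcases hu with rfl | rfl <;> omega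
    rcases key a c w (Or.inl rfl) with h | h
    · exact hca h
    · exact hcb h
  let e : Fin 4 ≃ V := (Fintype.equivFinOfCardEq hV).symm
  have hd : ∀ i, m i (e 0) + m i (e 1) + m i (e 2) + m i (e 3) = 3 := by
    intro i
    have h := hdeg i
    rw [← Equiv.sum_comp e, Fin.sum_univ_four] at h
    exact h
  have hall : ∀ x, x = e 0 ∨ x = e 1 ∨ x = e 2 ∨ x = e 3 := by
    intro x
    obtain ⟨k, rfl⟩ := e.surjective x
    fin_cases k <;> simp
  have hne : ∀ i j : Fin 4, i ≠ j → e i ≠ e j := fun i j h => e.injective.ne h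
  have n01 := hne 0 1 (by decide)
  have n02 := hne 0 2 (by decide)
  have n03 := hne 0 3 (by decide)
  have n12 := hne 1 2 (by decide)
  have n13 := hne 1 3 (by decide)
  have n23 := hne 2 3 (by decide)
  generalize e 0 = p at *
  generalize e 1 = q at *
  generalize e 2 = r at *
  generalize e 3 = s at *
  have hp := hd p
  have hq := hd q
  have hr := hd r
  have hs := hd s
  rw [hloop] at hp hq hr hs
  rw [hsymm q p] at hq
  rw [hsymm r p, hsymm r q] at hr
  rw [hsymm s p, hsymm s q, hsymm s r] at hs
  have qp := hsymm q p
  have rp := hsymm r p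
  have rq := hsymm r q
  have sp := hsymm s p
  have sq := hsymm s q
  have sr := hsymm s r
  have c1 := hcut p q r s n02.symm n12.symm hall
  have c2 := hcut p r q s n01.symm n12 (fun x => by rcases hall x with h | h | h | h <;> simp only [h, true_or, or_true])
  have c3 := hcut p s q r n01.symm n13 (fun x => by rcases hall x with h | h | h | h <;> simp only [h, true_or, or_true])
  have t1 : m r s = m p q := by omega
  have t2 : m q s = m p r := by omega
  have t3 : m q r = m p s := by omega
  have t : m p q + m p r + m p s = 3 := by omega
  clear hp hq hr hs
  by_cases hK : m p q = 1 ∧ m p r = 1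
  · left
    intro i j hij
    rcases hall i with rfl | rfl | rfl | rfl <;> rcases hall j with rfl | rfl | rfl | rfl <;>
      first | exact absurd rfl hij | omega
  · right
    have hu : ∀ a b c d : V, (∀ x, x = a ∨ x = b ∨ x = c ∨ x = d) →
        ({a, b, c, d} : Finset V) = Finset.univ := by
      intro a b c d h
      ext x
      simpa using h x
    have hcases : (m p q = 2 ∧ m p r = 1) ∨ (m p q = 2 ∧ m p s = 1) ∨
        (m p r = 2 ∧ m p q = 1) ∨ (m p r = 2 ∧ m p s = 1) ∨
        (m p s = 2 ∧ m p q = 1) ∨ (m p s = 2 ∧ m p r = 1) := by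
      have aux : ∀ x y z : ℕ, x + y + z = 3 → ¬ (x = 1 ∧ y = 1) → x ≠ 3 → y ≠ 3 → z ≠ 3 →
          (x = 2 ∧ y = 1) ∨ (x = 2 ∧ z = 1) ∨ (y = 2 ∧ x = 1) ∨ (y = 2 ∧ z = 1) ∨
          (z = 2 ∧ x = 1) ∨ (z = 2 ∧ y = 1) := by
        intro x y z h hn hx hy hz
        have hx4 : x < 3 := by omega
        have hy4 : y < 3 := by omega
        interval_cases x <;> interval_cases y <;> omega
      have e1 : m p q ≠ 3 := fun h => c1 (by omega) (by omega) (by omega) (by omega)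
      have e2 : m p r ≠ 3 := fun h => c2 (by omega) (by omega) (by omega) (by omega)
      have e3 : m p s ≠ 3 := fun h => c3 (by omega) (by omega) (by omega) (by omega)
      exact aux _ _ _ (by omega) hK e1 e2 e3
    rcases hcases with h | h | h | h | h | h
    · exact ⟨p, q, r, s, hu _ _ _ _ (fun x => by rcases hall x with h | h | h | h <;> simp only [h, true_or, or_true]),
        by omega, by omega, by omega, by omega, by omega, by omega⟩
    · exact ⟨p, q, s, r, hu _ _ _ _ (fun x => by rcases hall x with h | h | h | h <;> simp only [h, true_or, or_true]),
        by omega, by omega, by omega, by omega, by omega, by omega⟩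
    · exact ⟨p, r, q, s, hu _ _ _ _ (fun x => by rcases hall x with h | h | h | h <;> simp only [h, true_or, or_true]),
        by omega, by omega, by omega, by omega, by omega, by omega⟩
    · exact ⟨p, r, s, q, hu _ _ _ _ (fun x => by rcases hall x with h | h | h | h <;> simp only [h, true_or, or_true]),
        by omega, by omega, by omega, by omega, by omega, by omega⟩
    · exact ⟨p, s, q, r, hu _ _ _ _ (fun x => by rcases hall x with h | h | h | h <;> simp only [h, true_or, or_true]),
        by omega, by omega, by omega, by omega, by omega, by omega⟩
    · exact ⟨p, s, r, q, hu _ _ _ _ (fun x => by rcases hall x with h | h | h | h <;> simp only [h, true_or, or_true]),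
        by omega, by omega, by omega, by omega, by omega, by omega⟩
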